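/- For each n ≥ 1, the statistic s(σ) = n − run(σ) + 2·lsg(σ) + rsg(σ) on S_n is equidistributed with the statistic s'(σ) = n − run(σ) + lsg(sing)(σ) + 2·rsg(sing)(σ) + lsg(op)(σ) + 2·rsg(op)(σ) + 2·lsg(cont)(σ) + rsg(cont)(σ) + 2·lsg(clos)(σ) + rsg(clos)(σ); i.e., both generating functions Σ_{σ∈S_n} q^{s(σ)} and Σ_{σ∈S_n} q^{s'(σ)} equal [n]_q!. -/

import Mathlib

/-!
Let `h v` be the number of ascents `a < v ≤ b` (consecutive letters `a b`) of the word of `σ`: it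
counts the segments, other than the final one, into which the letters below `v` are grouped. A run
straddles `v` without containing it exactly when it contains an ascent `a < v < b`, and then only
one. So `lsg v + rsg v = h v - d v`, where `d v = 1` if `v` has a smaller left neighbour (does not
begin a run), and `d v = 0` otherwise. Moreover `h (v+1) = h v + u v - d v`, where `u v = 1` if `v`
has a larger right neighbour. Reading the triples `(d v, u v, lsg v)` in increasing order of `v` (the
Françon–Viennot bijection) gives a labelled Motzkin path, a Laguerre history (`codes_mem_hist`).

The history determines `σ` (`codes_injective`): going from smaller to larger letters, `d v + lsg v`
says among which segments `v` is inserted, and `d v`, `u v` say which segments it is attached to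
(`same_order`). Surjectivity then follows by counting (`card_hist`).

Since `n - run σ = ∑ d v`, the statistic `s` is `∑ (h v + lsg v)`, and `s'` is obtained from it by
replacing `lsg v` with `h v - lsg v` when `d v = 0`, a reflection of the range `0, …, h v` of
labels. Either way the labels of a step at height `h` contribute `q ^ h [h+1]` if `d = 0` and
`q ^ h [h]` if `d = 1`. With these weights the histories with `l` steps from height `h` down to `0`
have generating function `[l]! q ^ (h(h+1)/2) [l choose h]` (`sum_hist`), by the recurrence
`qbin_step`; at `h = 0` this is `[n]!`.
-/

open Finset

namespace SS

variable {n : ℕ}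

/-- `descB σ j = true` iff there is a descent between positions `j` and `j+1`
in the word `σ(1)σ(2)⋯σ(n)`. -/
def descB (σ : Equiv.Perm (Fin n)) (j : ℕ) : Bool :=
  if h : j + 1 < n then decide ((σ ⟨j+1, h⟩) < σ ⟨j, Nat.lt_of_succ_lt h⟩) else false

/-- The index of the maximal increasing run containing position `p`. -/
def runIdx (σ : Equiv.Perm (Fin n)) (p : ℕ) : ℕ :=
  ((Finset.range p).filter (fun j => descB σ j = true)).card

/-- The index of the run containing the value `v`. -/
def runOf (σ : Equiv.Perm (Fin n)) (v : Fin n) : ℕ := runIdx σ (σ.symm v).val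

/-- The number of maximal increasing runs of `σ`. -/
def runCount (σ : Equiv.Perm (Fin n)) : ℕ :=
  if n = 0 then 0 else runIdx σ n + 1

/-- `lsgAt σ v` : number of runs strictly to the left of (the run of) `v`
containing both an element smaller than `v` and an element greater than `v`. -/
def lsgAt (σ : Equiv.Perm (Fin n)) (v : Fin n) : ℕ :=
  ((Finset.range (runCount σ)).filter (fun r => r < runOf σ v ∧
      (∃ a : Fin n, runOf σ a = r ∧ a < v) ∧ (∃ b : Fin n, runOf σ b = r ∧ v < b))).card

/-- `rsgAt σ v` : number of runs strictly to the right of `v`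
containing both an element smaller than `v` and an element greater than `v`. -/
def rsgAt (σ : Equiv.Perm (Fin n)) (v : Fin n) : ℕ :=
  ((Finset.range (runCount σ)).filter (fun r => runOf σ v < r ∧
      (∃ a : Fin n, runOf σ a = r ∧ a < v) ∧ (∃ b : Fin n, runOf σ b = r ∧ v < b))).card

def lsg (σ : Equiv.Perm (Fin n)) : ℕ := ∑ v : Fin n, lsgAt σ v
def rsg (σ : Equiv.Perm (Fin n)) : ℕ := ∑ v : Fin n, rsgAt σ v

/-- position `p` begins a maximal increasing run. -/
def startsB (σ : Equiv.Perm (Fin n)) (p : ℕ) : Bool := p == 0 || descB σ (p - 1)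

/-- position `p` ends a maximal increasing run. -/
def endsB (σ : Equiv.Perm (Fin n)) (p : ℕ) : Bool := p + 1 == n || descB σ p

def openerB (σ : Equiv.Perm (Fin n)) (v : Fin n) : Bool :=
  startsB σ (σ.symm v).val && !endsB σ (σ.symm v).val
def closerB (σ : Equiv.Perm (Fin n)) (v : Fin n) : Bool :=
  endsB σ (σ.symm v).val && !startsB σ (σ.symm v).val
def singB (σ : Equiv.Perm (Fin n)) (v : Fin n) : Bool :=
  startsB σ (σ.symm v).val && endsB σ (σ.symm v).val
def contB (σ : Equiv.Perm (Fin n)) (v : Fin n) : Bool :=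
  !startsB σ (σ.symm v).val && !endsB σ (σ.symm v).val

def lsgOp (σ : Equiv.Perm (Fin n)) : ℕ :=
  ∑ v ∈ univ.filter (fun v : Fin n => openerB σ v = true), lsgAt σ v
def rsgOp (σ : Equiv.Perm (Fin n)) : ℕ :=
  ∑ v ∈ univ.filter (fun v : Fin n => openerB σ v = true), rsgAt σ v
def lsgClos (σ : Equiv.Perm (Fin n)) : ℕ :=
  ∑ v ∈ univ.filter (fun v : Fin n => closerB σ v = true), lsgAt σ v
def rsgClos (σ : Equiv.Perm (Fin n)) : ℕ :=
  ∑ v ∈ univ.filter (fun v : Fin n => closerB σ v = true), rsgAt σ v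
def lsgSing (σ : Equiv.Perm (Fin n)) : ℕ :=
  ∑ v ∈ univ.filter (fun v : Fin n => singB σ v = true), lsgAt σ v
def rsgSing (σ : Equiv.Perm (Fin n)) : ℕ :=
  ∑ v ∈ univ.filter (fun v : Fin n => singB σ v = true), rsgAt σ v
def lsgCont (σ : Equiv.Perm (Fin n)) : ℕ :=
  ∑ v ∈ univ.filter (fun v : Fin n => contB σ v = true), lsgAt σ v
def rsgCont (σ : Equiv.Perm (Fin n)) : ℕ :=
  ∑ v ∈ univ.filter (fun v : Fin n => contB σ v = true), rsgAt σ v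

/-- `[m]_q = 1 + q + ⋯ + q^{m-1}`. -/
def qint {R : Type*} [CommRing R] (q : R) (m : ℕ) : R := ∑ i ∈ Finset.range m, q ^ i

/-- `[n]_q! = [1]_q [2]_q ⋯ [n]_q`. -/
def qfact {R : Type*} [CommRing R] (q : R) (n : ℕ) : R := ∏ m ∈ Finset.range n, qint q (m+1)

/-- `moment b lam l h` : sum of the weights of all weighted Motzkin paths with `l` steps
starting at height `h` and ending at height `0`, where up steps have weight `1`,
a level step at height `k` has weight `b k`, and a down step from height `k`
has weight `lam k`.  The `n`th moment of the corresponding monic orthogonal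
polynomial sequence is `moment b lam n 0`. -/
def moment {R : Type*} [CommRing R] (b lam : ℕ → R) : ℕ → ℕ → R
  | 0, h => if h = 0 then 1 else 0
  | (l+1), h => moment b lam l (h+1) + b h * moment b lam l h +
      (if h = 0 then 0 else lam h * moment b lam l (h-1))

end SS
namespace SS

variable {n : ℕ}

/-! ### The weighted count of histories -/

/-- The coefficient of `x ^ k` in `∏_{i=1}^{l} (1 + q ^ i x)`, i.e. `q ^ (k(k+1)/2)` times the
`q`-binomial coefficient `[l choose k]`, here for `q = X`. -/
noncomputable def qbin : ℕ → ℕ → Polynomial ℤ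
  | 0, k => if k = 0 then 1 else 0
  | (l+1), 0 => qbin l 0
  | (l+1), (k+1) => Polynomial.X ^ (k+1) * (qbin l (k+1) + qbin l k)

local notation "X" => (Polynomial.X : Polynomial ℤ)

/-- Ratio of consecutive `q`-binomial coefficients, in a division-free form. -/
lemma qbin_ratio (m k : ℕ) :
    X * (X ^ m - X ^ k) * qbin m k = (X ^ (k+1) - 1) * qbin m (k+1) := by
  induction m generalizing k with
  | zero => rcases k with _ | k <;> simp [qbin]
  | succ m ih =>
    rcases k with _ | k
    · have h0 := ih 0
      simp only [qbin]
      simp only [zero_add, pow_zero, pow_one] at h0 ⊢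
      linear_combination X * h0
    · have h0 := ih k
      have h1 := ih (k+1)
      simp only [qbin]
      linear_combination X ^ (k+2) * h0 + X ^ (k+2) * h1

lemma qint_mul (m : ℕ) : (X - 1) * qint X m = X ^ m - 1 := by
  unfold qint
  rw [mul_comm]; exact geom_sum_mul X m

/-- `qbin l h` satisfies the recurrence of Motzkin paths read from height `h`. -/
lemma qbin_step (l h : ℕ) :
    X ^ h * qint X (h+1) * (qbin l h + qbin l (h+1))
      + X ^ h * qint X h * (qbin l (h-1) + qbin l h)
      = qint X (l+1) * qbin (l+1) h := by
  have hX : X * (X - 1) ≠ 0 := by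
    refine mul_ne_zero Polynomial.X_ne_zero ?_
    simpa using Polynomial.X_sub_C_ne_zero (1 : ℤ)
  apply mul_left_cancel₀ hX
  have a1 := qint_mul (h+1)
  have a2 := qint_mul h
  have a3 := qint_mul (l+1)
  have r := qbin_ratio (l+1) h
  rcases h with _ | h
  · simp only [qbin, zero_add, pow_zero, pow_one] at *
    simp only [qint, Finset.range_zero, Finset.sum_empty]
    simp only [qint] at a1 a3
    linear_combination X * (qbin l 0 + qbin l 1) * a1 - X * qbin l 0 * a3 - r
  · simp only [qbin, Nat.add_sub_cancel] at *
    linear_combination X ^ (h+2) * (qbin l (h+1) + qbin l (h+2)) * a1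
      + X ^ (h+2) * (qbin l h + qbin l (h+1)) * a2
      - X ^ (h+2) * (qbin l h + qbin l (h+1)) * a3 - r

/-- The steps available at height `h`: triples `(d, u, j)` with `d, u ∈ {0, 1}` and `d + j ≤ h`;
such a step leads to height `h + u - d`. -/
def steps (h : ℕ) : Finset (ℕ × ℕ × ℕ) :=
  (Finset.range 2 ×ˢ Finset.range 2 ×ˢ Finset.range (h+1)).filter (fun c => c.1 + c.2.2 ≤ h)

/-- Laguerre histories: labelled Motzkin paths with `l` steps from height `h` to height `0`. -/
def hist : ℕ → ℕ → Finset (List (ℕ × ℕ × ℕ))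
  | 0, h => if h = 0 then {[]} else ∅
  | (l+1), h => (steps h).biUnion fun c =>
      (hist l (h + c.2.1 - c.1)).map ⟨List.cons c, List.cons_injective⟩

/-- Total weight of a history starting at height `h`, a step `(d, u, j)` at height `k` having
weight `e k d j`. -/
def wt (e : ℕ → ℕ → ℕ → ℕ) : ℕ → List (ℕ × ℕ × ℕ) → ℕ
  | _, [] => 0
  | h, c :: L => e h c.1 c.2.2 + wt e (h + c.2.1 - c.1) L

/-- Generating function of the histories. -/
lemma sum_hist (e : ℕ → ℕ → ℕ → ℕ)
    (he0 : ∀ h, ∑ j ∈ Finset.range (h+1), X ^ e h 0 j = X ^ h * qint X (h+1))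
    (he1 : ∀ h, ∑ j ∈ Finset.range h, X ^ e h 1 j = X ^ h * qint X h) (l h : ℕ) :
    ∑ L ∈ hist l h, X ^ wt e h L = qfact X l * qbin l h := by
  induction l generalizing h with
  | zero =>
    by_cases hh : h = 0 <;> simp [hist, wt, qbin, qfact, hh]
  | succ l ih =>
    have hq : qfact X (l+1) = qfact X l * qint X (l+1) := by
      simp [qfact, Finset.prod_range_succ]
    have h1 : ∀ f : ℕ → Polynomial ℤ,
        ∑ j ∈ Finset.range (h+1), (if 1 + j ≤ h then f j else 0)
          = ∑ j ∈ Finset.range h, f j := by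
      intro f
      rw [Finset.sum_range_succ, if_neg (by omega), add_zero]
      refine Finset.sum_congr rfl fun j hj => ?_
      rw [if_pos (by have := Finset.mem_range.1 hj; omega)]
    have h0 : ∀ f : ℕ → Polynomial ℤ,
        ∑ j ∈ Finset.range (h+1), (if 0 + j ≤ h then f j else 0)
          = ∑ j ∈ Finset.range (h+1), f j := by
      intro f
      refine Finset.sum_congr rfl fun j hj => ?_
      rw [if_pos (by have := Finset.mem_range.1 hj; omega)]
    rw [hist, Finset.sum_biUnion]
    · simp only [Finset.sum_map, Function.Embedding.coeFn_mk, wt, pow_add, ← Finset.mul_sum, ih]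
      rw [steps, Finset.sum_filter, Finset.sum_product]
      simp only [Finset.sum_product, Finset.sum_range_succ _ 1, Finset.sum_range_one]
      rw [h0, h0, h1, h1]
      simp only [← Finset.sum_mul, he0, he1, hq]
      simp only [Nat.sub_zero, Nat.add_sub_cancel, add_zero]
      linear_combination qfact X l * qbin_step l h
    · intro c _ c' _ hcc
      rw [Function.onFun, Finset.disjoint_left]
      intro L hL hL'
      simp only [Finset.mem_map, Function.Embedding.coeFn_mk] at hL hL'
      obtain ⟨a, _, rfl⟩ := hL
      obtain ⟨b, _, hb⟩ := hL'
      exact hcc (List.cons.inj hb).1.symm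

lemma qbin_zero (l : ℕ) : qbin l 0 = 1 := by
  induction l with
  | zero => simp [qbin]
  | succ l ih => simpa [qbin] using ih

lemma sum_qint_shift (h m : ℕ) :
    ∑ j ∈ Finset.range m, X ^ (h + j) = X ^ h * qint X m := by
  simp [qint, pow_add, Finset.mul_sum]

lemma card_hist (n : ℕ) : (hist n 0).card = n.factorial := by
  have h := sum_hist (fun h _ j => h + j) (fun h => sum_qint_shift h _)
    (fun h => sum_qint_shift h _) n 0
  have h2 := congrArg (Polynomial.eval 1) h
  simp [Polynomial.eval_finsetSum, qbin_zero, qfact, qint, Polynomial.eval_prod] at h2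
  have h3 : ∏ x ∈ Finset.range n, ((x : ℤ) + 1) = (n.factorial : ℤ) := by
    rw [← Finset.prod_range_add_one_eq_factorial]; push_cast; rfl
  rw [h3] at h2
  exact_mod_cast h2

/-! ### The history of a permutation -/

/-- The letter at position `p`, shifted by one so that the value `0` can stand for
"past the end of the word". -/
def w1 (σ : Equiv.Perm (Fin n)) (p : ℕ) : ℕ := if h : p < n then (σ ⟨p, h⟩).val + 1 else 0

/-- The position of the letter `a` (junk value `0` for `a ≥ n`). -/
def ps (σ : Equiv.Perm (Fin n)) (a : ℕ) : ℕ := if h : a < n then (σ.symm ⟨a, h⟩).val else 0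

/-- The letter following `a`, shifted by one; `0` if `a` is the last letter. -/
def nx (σ : Equiv.Perm (Fin n)) (a : ℕ) : ℕ := w1 σ (ps σ a + 1)

lemma ps_lt (σ : Equiv.Perm (Fin n)) {a : ℕ} (h : a < n) : ps σ a < n := by
  simp [ps, h]

lemma w1_ps (σ : Equiv.Perm (Fin n)) {a : ℕ} (h : a < n) : w1 σ (ps σ a) = a + 1 := by
  simp [ps, w1, h]

lemma w1_le (σ : Equiv.Perm (Fin n)) (p : ℕ) : w1 σ p ≤ n := by
  unfold w1; split_ifs <;> omega

lemma ps_of_w1 (σ : Equiv.Perm (Fin n)) {a p : ℕ} (h : w1 σ p = a + 1) : ps σ a = p := by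
  unfold w1 at h
  split_ifs at h with hp
  have : (σ ⟨p, hp⟩).val = a := by omega
  subst this
  simp [ps]

lemma ps_inj (σ : Equiv.Perm (Fin n)) {a b : ℕ} (ha : a < n) (hb : b < n)
    (h : ps σ a = ps σ b) : a = b := by
  have := w1_ps σ ha
  rw [h, w1_ps σ hb] at this
  omega

lemma exists_ps (σ : Equiv.Perm (Fin n)) {p : ℕ} (hp : p < n) :
    ∃ a < n, ps σ a = p ∧ w1 σ p = a + 1 :=
  ⟨σ ⟨p, hp⟩, (σ ⟨p, hp⟩).isLt, by simp [ps], by simp [w1, hp]⟩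

lemma nx_le (σ : Equiv.Perm (Fin n)) (a : ℕ) : nx σ a ≤ n := w1_le _ _

lemma ps_nx (σ : Equiv.Perm (Fin n)) {a b : ℕ} (h : nx σ a = b + 1) : ps σ b = ps σ a + 1 :=
  ps_of_w1 σ h

lemma nx_eq (σ : Equiv.Perm (Fin n)) {a b : ℕ} (hb : b < n) (h : ps σ b = ps σ a + 1) :
    nx σ a = b + 1 := by
  rw [nx, ← h, w1_ps σ hb]

/-- The last letters, the final one excepted, of the segments formed by the letters below `v`. -/
def ends (σ : Equiv.Perm (Fin n)) (v : ℕ) : Finset ℕ := (Finset.range v).filter (fun a => v < nx σ a)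

/-- Bottoms of the ascents that straddle `v` and lie left of `v`. -/
def lset (σ : Equiv.Perm (Fin n)) (v : ℕ) : Finset ℕ :=
  (Finset.range v).filter (fun a => v + 1 < nx σ a ∧ ps σ a < ps σ v)

/-- Bottoms of the ascents that straddle `v` and lie right of `v`. -/
def rset (σ : Equiv.Perm (Fin n)) (v : ℕ) : Finset ℕ :=
  (Finset.range v).filter (fun a => v + 1 < nx σ a ∧ ps σ v < ps σ a)

/-- The set of smaller left neighbours of `v`: it has at most one element. -/
def dset (σ : Equiv.Perm (Fin n)) (v : ℕ) : Finset ℕ :=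
  (Finset.range v).filter (fun a => nx σ a = v + 1)

/-- The step of the history of `σ` read off from the letter `v`. -/
def code (σ : Equiv.Perm (Fin n)) (v : ℕ) : ℕ × ℕ × ℕ :=
  ((dset σ v).card, (if v + 1 < nx σ v then 1 else 0), (lset σ v).card)

/-- The height of the history of `σ` before the letter `v`. -/
def ht (σ : Equiv.Perm (Fin n)) (v : ℕ) : ℕ := (ends σ v).card

lemma dset_card_le (σ : Equiv.Perm (Fin n)) {v : ℕ} (hv : v < n) : (dset σ v).card ≤ 1 := by
  refine Finset.card_le_one.2 fun a ha b hb => ?_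
  simp only [dset, Finset.mem_filter, Finset.mem_range] at ha hb
  have h1 := ps_nx σ ha.2
  have h2 := ps_nx σ hb.2
  exact ps_inj σ (by omega) (by omega) (by omega : ps σ a = ps σ b)

lemma ends_split (σ : Equiv.Perm (Fin n)) {v : ℕ} (hv : v < n) :
    (dset σ v).card + (lset σ v).card + (rset σ v).card = ht σ v := by
  have e : ends σ v = (dset σ v ∪ lset σ v) ∪ rset σ v := by
    ext a
    simp only [ends, dset, lset, rset, Finset.mem_union, Finset.mem_filter, Finset.mem_range]
    constructor
    · rintro ⟨h1, h2⟩
      have : ps σ a ≠ ps σ v := fun h => by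
        have := ps_inj σ (by omega) hv h
        omega
      grind
    · grind
  rw [ht, e, Finset.card_union_of_disjoint, Finset.card_union_of_disjoint]
  · rw [Finset.disjoint_left]
    intro a
    simp only [dset, lset, Finset.mem_filter]
    omega
  · rw [Finset.disjoint_left]
    intro a
    simp only [dset, lset, rset, Finset.mem_filter, Finset.mem_union]
    omega

/-- The segments of smaller letters left of `v`: besides the `lset σ v` ones, there is the segment
ending right before `v`, if `v` has a smaller left neighbour. -/
lemma ends_left_card (σ : Equiv.Perm (Fin n)) (v : ℕ) :
    ((ends σ v).filter (fun e => ps σ e < ps σ v)).card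
      = (dset σ v).card + (lset σ v).card := by
  rw [← Finset.card_union_of_disjoint]
  · congr 1
    ext a
    simp only [ends, dset, lset, Finset.mem_union, Finset.mem_filter, Finset.mem_range]
    constructor
    · grind
    · rintro (⟨h1, h2⟩ | h)
      · have := ps_nx σ h2
        omega
      · omega
  · rw [Finset.disjoint_left]
    intro a
    simp only [dset, lset, Finset.mem_filter]
    omega

lemma ht_succ (σ : Equiv.Perm (Fin n)) (v : ℕ) :
    ht σ (v+1) + (dset σ v).card = ht σ v + (code σ v).2.1 := by
  have hd : dset σ v ⊆ ends σ v := by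
    intro a
    simp only [dset, ends, Finset.mem_filter, Finset.mem_range]
    omega
  have e : ends σ (v+1) = (ends σ v \ dset σ v) ∪ (if v + 1 < nx σ v then {v} else ∅) := by
    ext a
    simp only [ends, dset, Finset.mem_union, Finset.mem_filter, Finset.mem_range,
      Finset.mem_sdiff]
    split_ifs with h <;> simp only [Finset.mem_singleton, Finset.notMem_empty] <;> grind
  have := Finset.card_le_card hd
  rw [ht, ht, e, Finset.card_union_of_disjoint, Finset.card_sdiff_of_subset hd, code]
  · dsimp only
    split_ifs <;> simp only [Finset.card_singleton, Finset.card_empty] <;> omega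
  · rw [Finset.disjoint_left]
    intro a
    simp only [ends, Finset.mem_filter, Finset.mem_sdiff, Finset.mem_range]
    split_ifs <;> simp <;> omega

lemma code_mem_steps (σ : Equiv.Perm (Fin n)) {v : ℕ} (hv : v < n) :
    code σ v ∈ steps (ht σ v) := by
  have h1 := dset_card_le σ hv
  have h2 := ends_split σ hv
  simp only [steps, code, Finset.mem_filter, Finset.mem_product, Finset.mem_range]
  split_ifs <;> omega

lemma ht_end (σ : Equiv.Perm (Fin n)) : ht σ n = 0 := by
  rw [ht, Finset.card_eq_zero, ends, Finset.filter_eq_empty_iff]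
  intro a _
  have := nx_le σ a
  omega

/-- The part of the history of `σ` coming from the `l` letters `v, v+1, …`. -/
def codes (σ : Equiv.Perm (Fin n)) (v l : ℕ) : List (ℕ × ℕ × ℕ) :=
  (List.range' v l).map (code σ)

lemma codes_succ (σ : Equiv.Perm (Fin n)) (v l : ℕ) :
    codes σ v (l+1) = code σ v :: codes σ (v+1) l := by
  simp [codes, List.range'_succ]

lemma ht_next (σ : Equiv.Perm (Fin n)) (v : ℕ) :
    ht σ v + (code σ v).2.1 - (code σ v).1 = ht σ (v+1) := by
  have := ht_succ σ v
  simp only [code] at *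
  omega

lemma codes_mem_hist (σ : Equiv.Perm (Fin n)) (l v : ℕ) (h : v + l = n) :
    codes σ v l ∈ hist l (ht σ v) := by
  induction l generalizing v with
  | zero =>
    have : v = n := by omega
    simp [codes, hist, this, ht_end]
  | succ l ih =>
    rw [hist, Finset.mem_biUnion]
    refine ⟨code σ v, code_mem_steps σ (by omega), ?_⟩
    rw [Finset.mem_map, ht_next]
    exact ⟨codes σ (v+1) l, ih (v+1) (by omega), (codes_succ σ v l).symm⟩

lemma wt_codes (e : ℕ → ℕ → ℕ → ℕ) (σ : Equiv.Perm (Fin n)) (l v : ℕ) :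
    wt e (ht σ v) (codes σ v l)
      = ∑ a ∈ Finset.Ico v (v + l), e (ht σ a) (dset σ a).card (lset σ a).card := by
  induction l generalizing v with
  | zero => simp [codes, wt]
  | succ l ih =>
    rw [codes_succ, wt, ht_next, ih, Finset.sum_eq_sum_Ico_succ_bot (by omega : v < v + (l+1))]
    rw [show v + 1 + l = v + (l + 1) by omega]
    rfl

/-! ### A permutation is determined by its history -/

/-- A letter below `v` sitting left of a position whose letter is at least `v` belongs to a
segment that ends before that position. -/
lemma exists_end (σ : Equiv.Perm (Fin n)) {v a q : ℕ} (ha : a < v) (hv : v ≤ n)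
    (hq : v < w1 σ q) (hpq : ps σ a < q) :
    ∃ e ∈ ends σ v, ps σ a ≤ ps σ e ∧ ps σ e < q := by
  have hqn : q < n := by
    by_contra h
    simp [w1, h] at hq
  obtain ⟨d, rfl⟩ : ∃ d, q = ps σ a + d := ⟨q - ps σ a, by omega⟩
  clear hpq
  induction d with
  | zero =>
    rw [add_zero, w1_ps σ (by omega)] at hq
    omega
  | succ d ih =>
    by_cases h : v < w1 σ (ps σ a + d)
    · obtain ⟨e, he, h1, h2⟩ := ih h (by omega)
      exact ⟨e, he, h1, by omega⟩
    · obtain ⟨e, hen, h1, h2⟩ := exists_ps σ (p := ps σ a + d) (by omega)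
      refine ⟨e, ?_, by omega, by omega⟩
      simp only [ends, Finset.mem_filter, Finset.mem_range]
      refine ⟨by omega, ?_⟩
      rwa [nx, h1]

/-- The place of `v` among the smaller letters is determined by the number of segments lying
to its left. -/
lemma ps_lt_iff (σ : Equiv.Perm (Fin n)) {v a : ℕ} (ha : a < v) (hv : v < n) :
    ps σ a < ps σ v ↔ ((ends σ v).filter (fun e => ps σ e < ps σ a)).card
      < (dset σ v).card + (lset σ v).card := by
  rw [← ends_left_card σ v]
  constructor
  · intro h
    obtain ⟨e, he, h1, h2⟩ := exists_end σ ha hv.le (by rw [w1_ps σ hv]; omega) h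
    refine Finset.card_lt_card ((Finset.ssubset_iff_of_subset ?_).2 ⟨e, ?_, ?_⟩)
    · intro x
      simp only [Finset.mem_filter]
      exact fun hx => ⟨hx.1, by omega⟩
    · exact Finset.mem_filter.2 ⟨he, h2⟩
    · simp only [Finset.mem_filter]
      omega
  · intro h
    by_contra hn
    refine absurd h (not_lt.2 (Finset.card_le_card ?_))
    intro x
    simp only [Finset.mem_filter]
    exact fun hx => ⟨hx.1, by omega⟩

/-- The left neighbour of `v`, if smaller than `v`, is the last segment end before `v`. -/
lemma nx_eq_iff (σ : Equiv.Perm (Fin n)) {v a : ℕ} (ha : a < v) (hv : v < n) :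
    nx σ a = v + 1 ↔ a ∈ ends σ v ∧ 0 < (dset σ v).card ∧ ps σ a < ps σ v ∧
      ∀ e ∈ ends σ v, ps σ e < ps σ v → ¬ ps σ a < ps σ e := by
  constructor
  · intro h
    have h1 := ps_nx σ h
    refine ⟨?_, ?_, by omega, fun e _ _ => by omega⟩
    · simp only [ends, Finset.mem_filter, Finset.mem_range]; omega
    · refine Finset.card_pos.2 ⟨a, ?_⟩
      simp only [dset, Finset.mem_filter, Finset.mem_range]; omega
  · rintro ⟨_, h2, h3, h4⟩
    obtain ⟨b, hb⟩ := Finset.card_pos.1 h2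
    simp only [dset, Finset.mem_filter, Finset.mem_range] at hb
    have h5 := ps_nx σ hb.2
    have h6 := h4 b (by simp only [ends, Finset.mem_filter, Finset.mem_range]; omega) (by omega)
    have h7 : a = b := ps_inj σ (by omega) (by omega) (by omega)
    rw [h7, hb.2]

/-- Two permutations with the same history have the same relative order and the same segments
of letters below `v`, for every `v`. -/
lemma same_order (σ τ : Equiv.Perm (Fin n)) (h : ∀ v < n, code σ v = code τ v) (v : ℕ)
    (hv : v ≤ n) : (∀ a < v, ∀ b < v, (ps σ a < ps σ b ↔ ps τ a < ps τ b)) ∧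
      ∀ a < v, (v < nx σ a ↔ v < nx τ a) := by
  induction v with
  | zero => simp
  | succ v ih =>
    obtain ⟨i1, i2⟩ := ih (by omega)
    have hc := h v (by omega)
    simp only [code, Prod.mk.injEq] at hc
    obtain ⟨c1, c2, c3⟩ := hc
    have hE : ends σ v = ends τ v := by
      refine Finset.filter_congr fun a ha => i2 a (Finset.mem_range.1 ha)
    have hmem : ∀ e ∈ ends τ v, e < v := fun e he =>
      Finset.mem_range.1 (Finset.mem_filter.1 he).1
    have key : ∀ a < v, (ps σ a < ps σ v ↔ ps τ a < ps τ v) := by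
      intro a ha
      rw [ps_lt_iff σ ha (by omega), ps_lt_iff τ ha (by omega), c1, c3, hE]
      rw [Finset.filter_congr fun e he => i1 e (hmem e he) a ha]
    have neq : ∀ ρ : Equiv.Perm (Fin n), ∀ a < v, ps ρ a ≠ ps ρ v := fun ρ a ha he => by
      have := ps_inj ρ (by omega) (by omega) he
      omega
    constructor
    · intro a ha b hb
      rcases Nat.lt_succ_iff_lt_or_eq.1 ha with ha | rfl
      · rcases Nat.lt_succ_iff_lt_or_eq.1 hb with hb | rfl
        · exact i1 a ha b hb
        · exact key a ha
      · rcases Nat.lt_succ_iff_lt_or_eq.1 hb with hb | rfl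
        · have k := key b hb
          have n1 := neq σ b hb
          have n2 := neq τ b hb
          omega
        · simp
    · intro a ha
      rcases Nat.lt_succ_iff_lt_or_eq.1 ha with ha | rfl
      · have k1 := i2 a ha
        have k2 : nx σ a = v + 1 ↔ nx τ a = v + 1 := by
          rw [nx_eq_iff σ ha (by omega), nx_eq_iff τ ha (by omega), hE, c1, key a ha]
          have : (∀ e ∈ ends τ v, ps σ e < ps σ v → ¬ ps σ a < ps σ e) ↔
              ∀ e ∈ ends τ v, ps τ e < ps τ v → ¬ ps τ a < ps τ e :=
            forall₂_congr fun e he => by rw [key e (hmem e he), i1 a ha e (hmem e he)]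
          rw [this]
        omega
      · split_ifs at c2 <;> omega

lemma ps_eq_card (σ : Equiv.Perm (Fin n)) {a : ℕ} (ha : a < n) :
    ps σ a = ((Finset.range n).filter (fun b => ps σ b < ps σ a)).card := by
  have := ps_lt σ ha
  rw [← Finset.card_image_of_injOn (f := ps σ)]
  · rw [show ((Finset.range n).filter (fun b => ps σ b < ps σ a)).image (ps σ)
      = Finset.range (ps σ a) by
        ext p
        simp only [Finset.mem_image, Finset.mem_filter, Finset.mem_range]
        constructor
        · rintro ⟨b, hb, rfl⟩; exact hb.2
        · intro hp
          obtain ⟨b, hb, h1, _⟩ := exists_ps σ (p := p) (by omega)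
          exact ⟨b, ⟨hb, by omega⟩, h1⟩]
    simp
  · intro b hb c hc hbc
    simp only [Finset.coe_filter, Finset.mem_range, Set.mem_ofPred_eq] at hb hc
    exact ps_inj σ hb.1 hc.1 hbc

lemma codes_injective : Function.Injective (fun σ : Equiv.Perm (Fin n) => codes σ 0 n) := by
  intro σ τ h
  have hc : ∀ v < n, code σ v = code τ v := by
    intro v hv
    refine List.map_inj_left.1 h v ?_
    simp [hv]
  have ho := (same_order σ τ hc n le_rfl).1
  have hs : σ.symm = τ.symm := by
    ext ⟨a, ha⟩
    have : ps σ a = ps τ a := by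
      rw [ps_eq_card σ ha, ps_eq_card τ ha]
      congr 1
      exact Finset.filter_congr fun b hb => ho b (Finset.mem_range.1 hb) a ha
    simpa [ps, ha] using this
  rw [← σ.symm_symm, hs, τ.symm_symm]

/-- Permutations and Laguerre histories are equinumerous, so the injection `codes` transports
sums over one to sums over the other. -/
lemma sum_perm (e : ℕ → ℕ → ℕ → ℕ)
    (he0 : ∀ h, ∑ j ∈ Finset.range (h+1), X ^ e h 0 j = X ^ h * qint X (h+1))
    (he1 : ∀ h, ∑ j ∈ Finset.range h, X ^ e h 1 j = X ^ h * qint X h) :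
    ∑ σ : Equiv.Perm (Fin n),
      X ^ (∑ a ∈ Finset.range n, e (ht σ a) (dset σ a).card (lset σ a).card)
      = qfact X n := by
  have h0 : ∀ σ : Equiv.Perm (Fin n), ht σ 0 = 0 := fun σ => by simp [ht, ends]
  have him : (Finset.univ : Finset (Equiv.Perm (Fin n))).image (fun σ => codes σ 0 n)
      = hist n 0 := by
    refine Finset.eq_of_subset_of_card_le ?_ ?_
    · intro L hL
      obtain ⟨σ, _, rfl⟩ := Finset.mem_image.1 hL
      have := codes_mem_hist σ n 0 (by omega)
      rwa [h0] at this
    · rw [Finset.card_image_of_injective _ codes_injective, card_hist, Finset.card_univ,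
        Fintype.card_perm, Fintype.card_fin]
  have hs := sum_hist e he0 he1 n 0
  rw [qbin_zero, mul_one, ← him, Finset.sum_image fun _ _ _ _ h => codes_injective h] at hs
  rw [← hs]
  refine Finset.sum_congr rfl fun σ _ => ?_
  have := wt_codes e σ n 0
  rw [h0] at this
  rw [this, zero_add, Finset.range_eq_Ico]

/-! ### Runs and straddling ascents -/

lemma descB_iff (σ : Equiv.Perm (Fin n)) (j : ℕ) :
    descB σ j = true ↔ j + 1 < n ∧ w1 σ (j+1) < w1 σ j := by
  unfold descB w1
  by_cases h : j + 1 < n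
  · simp only [h, Nat.lt_of_succ_lt h, dif_pos, decide_eq_true_eq, true_and, Fin.lt_def]
    omega
  · simp [h]

lemma w1_lt_succ (σ : Equiv.Perm (Fin n)) {j : ℕ} (hj : j + 1 < n) (h : ¬ descB σ j = true) :
    w1 σ j < w1 σ (j+1) := by
  rw [descB_iff] at h
  obtain ⟨a, ha, h1, h2⟩ := exists_ps σ (p := j) (by omega)
  obtain ⟨b, hb, h3, h4⟩ := exists_ps σ hj
  have : a ≠ b := by rintro rfl; omega
  omega

lemma runIdx_succ (σ : Equiv.Perm (Fin n)) (p : ℕ) :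
    runIdx σ (p+1) = runIdx σ p + if descB σ p = true then 1 else 0 := by
  unfold runIdx
  rw [Finset.range_add_one, Finset.filter_insert]
  split_ifs
  · rw [Finset.card_insert_of_notMem (by simp)]
  · rfl

lemma runIdx_mono (σ : Equiv.Perm (Fin n)) : Monotone (runIdx σ) :=
  monotone_nat_of_le_succ fun p => by rw [runIdx_succ]; omega

lemma w1_le_of_runIdx_eq (σ : Equiv.Perm (Fin n)) {p q : ℕ} (hpq : p ≤ q) (hq : q < n)
    (h : runIdx σ p = runIdx σ q) : w1 σ p ≤ w1 σ q := by
  induction q, hpq using Nat.le_induction with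
  | base => exact le_rfl
  | succ q hpq ih =>
    have m := runIdx_mono σ hpq
    rw [runIdx_succ] at h
    split_ifs at h with hd
    · omega
    · exact (ih (by omega) (by omega)).trans (w1_lt_succ σ hq hd).le

/-- The run containing `a` has no letter whose value lies strictly between `a` and the right
neighbour of `a`. -/
lemma run_gap (σ : Equiv.Perm (Fin n)) {a p : ℕ} (ha : a < n) (hp : p < n)
    (hr : runIdx σ p = runIdx σ (ps σ a)) : w1 σ p ≤ a + 1 ∨ nx σ a ≤ w1 σ p := by
  rcases le_or_gt p (ps σ a) with hle | hlt
  · left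
    have := w1_le_of_runIdx_eq σ hle (ps_lt σ ha) hr
    rwa [w1_ps σ ha] at this
  · right
    refine w1_le_of_runIdx_eq σ hlt hp ?_
    have h1 := runIdx_mono σ (Nat.le_succ (ps σ a))
    have h2 := runIdx_mono σ (Nat.succ_le_of_lt hlt)
    simp only [Nat.succ_eq_add_one] at *
    omega

lemma runOf_eq (σ : Equiv.Perm (Fin n)) (v : Fin n) : runOf σ v = runIdx σ (ps σ v) := by
  simp [runOf, ps]

lemma runOf_lt (σ : Equiv.Perm (Fin n)) (v : Fin n) : runOf σ v < runCount σ := by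
  have h0 : n ≠ 0 := by have := v.isLt; omega
  rw [runCount, if_neg h0, runOf_eq]
  exact Nat.lt_succ_of_le (runIdx_mono σ (ps_lt σ v.isLt).le)

/-- An ascent straddling `v` lies in a run other than that of `v`. -/
lemma runIdx_ne (σ : Equiv.Perm (Fin n)) {a v : ℕ} (ha : a < v) (hv : v < n)
    (h : v + 1 < nx σ a) : runIdx σ (ps σ a) ≠ runIdx σ (ps σ v) := by
  intro he
  have := run_gap σ (by omega) (ps_lt σ hv) he.symm
  rw [w1_ps σ hv] at this
  omega

/-- A run contains at most one ascent straddling `v`. -/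
lemma runIdx_injOn (σ : Equiv.Perm (Fin n)) {a b v : ℕ} (ha : a < v) (hb : b < v) (hv : v < n)
    (hna : v + 1 < nx σ a) (hnb : v + 1 < nx σ b)
    (h : runIdx σ (ps σ a) = runIdx σ (ps σ b)) : a = b := by
  have h1 := run_gap σ (by omega) (ps_lt σ (by omega : b < n)) h.symm
  have h2 := run_gap σ (by omega) (ps_lt σ (by omega : a < n)) h
  rw [w1_ps σ (by omega)] at h1 h2
  omega

/-- A run other than that of `v` with a letter below and a letter above `v` contains an ascent
straddling `v`. -/
lemma exists_asc (σ : Equiv.Perm (Fin n)) {a b v : Fin n} (ha : a < v) (hb : v < b)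
    (hab : runOf σ a = runOf σ b) (hv : runOf σ a ≠ runOf σ v) :
    ∃ e < v.val, v.val + 1 < nx σ e ∧ runIdx σ (ps σ e) = runOf σ a := by
  rw [Fin.lt_def] at ha hb
  rw [runOf_eq, runOf_eq] at hab hv
  have hlt : ps σ a < ps σ b := by
    by_contra h
    have := w1_le_of_runIdx_eq σ (not_lt.1 h) (ps_lt σ a.isLt) hab.symm
    rw [w1_ps σ a.isLt, w1_ps σ b.isLt] at this
    omega
  obtain ⟨e, he, h1, h2⟩ := exists_end σ ha v.isLt.le (by rw [w1_ps σ b.isLt]; omega) hlt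
  simp only [ends, Finset.mem_filter, Finset.mem_range] at he
  have m1 := runIdx_mono σ h1
  have m2 := runIdx_mono σ h2.le
  refine ⟨e, he.1, ?_, by rw [runOf_eq]; omega⟩
  by_contra hn
  have hev := ps_nx σ (a := e) (b := v) (by omega)
  have m3 := runIdx_mono σ (by omega : ps σ e ≤ ps σ v)
  have m4 := runIdx_mono σ (by omega : ps σ v ≤ ps σ b)
  omega

/-- The run of an ascent straddling `v` satisfies the condition counted by `lsgAt` and `rsgAt`. -/
lemma run_straddles (σ : Equiv.Perm (Fin n)) {a : ℕ} {v : Fin n} (h1 : a < v)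
    (h2 : v.val + 1 < nx σ a) : runIdx σ (ps σ a) < runCount σ ∧
      (∃ x : Fin n, runOf σ x = runIdx σ (ps σ a) ∧ x < v) ∧
      (∃ y : Fin n, runOf σ y = runIdx σ (ps σ a) ∧ v < y) := by
  have hn := nx_le σ a
  have han : a < n := by omega
  have hb : nx σ a - 1 < n := by omega
  have hpb : ps σ (nx σ a - 1) = ps σ a + 1 := ps_nx σ (by omega)
  have hr := runOf_lt σ ⟨a, han⟩
  have hbr : runIdx σ (ps σ a + 1) = runIdx σ (ps σ a) := by
    rw [runIdx_succ, if_neg, add_zero]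
    rw [descB_iff, w1_ps σ han]
    rintro ⟨_, h⟩
    have : nx σ a < a + 1 := h
    omega
  rw [runOf_eq] at hr
  simp only [runOf_eq]
  refine ⟨hr, ⟨⟨a, han⟩, rfl, h1⟩, ⟨⟨nx σ a - 1, hb⟩, ?_, ?_⟩⟩
  · simp only [hpb, hbr]
  · rw [Fin.lt_def]
    simp only
    omega

/-- Runs straddling `v` on its left correspond to the straddling ascents they contain. -/
lemma lsgAt_eq (σ : Equiv.Perm (Fin n)) (v : Fin n) : lsgAt σ v = (lset σ v).card := by
  symm
  refine Finset.card_nbij (fun a => runIdx σ (ps σ a)) ?_ ?_ ?_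
  · intro a ha
    simp only [lset, Finset.mem_coe, Finset.mem_filter, Finset.mem_range] at ha
    obtain ⟨h1, h2, h3⟩ := ha
    obtain ⟨hr, hs⟩ := run_straddles σ h1 h2
    have hne := runIdx_ne σ h1 v.isLt h2
    have hle := runIdx_mono σ h3.le
    simp only [Finset.mem_coe, Finset.mem_filter, Finset.mem_range]
    refine ⟨hr, ?_, hs⟩
    rw [runOf_eq]
    omega
  · intro a ha b hb hab
    simp only [lset, Finset.coe_filter, Finset.mem_range, Set.mem_ofPred_eq] at ha hb
    exact runIdx_injOn σ ha.1 hb.1 v.isLt ha.2.1 hb.2.1 hab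
  · intro r hr
    simp only [Finset.coe_filter, Finset.mem_range, Set.mem_ofPred_eq] at hr
    obtain ⟨-, h2, ⟨a, rfl, ha⟩, ⟨b, hb, hvb⟩⟩ := hr
    obtain ⟨e, he, h3, h4⟩ := exists_asc σ ha hvb hb.symm h2.ne
    refine ⟨e, ?_, h4⟩
    simp only [lset, Finset.coe_filter, Finset.mem_range, Set.mem_ofPred_eq]
    refine ⟨he, h3, ?_⟩
    by_contra hn
    have := runIdx_mono σ (not_lt.1 hn)
    rw [runOf_eq σ v] at h2
    omega

/-- Runs straddling `v` on its right correspond to the straddling ascents they contain. -/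
lemma rsgAt_eq (σ : Equiv.Perm (Fin n)) (v : Fin n) : rsgAt σ v = (rset σ v).card := by
  symm
  refine Finset.card_nbij (fun a => runIdx σ (ps σ a)) ?_ ?_ ?_
  · intro a ha
    simp only [rset, Finset.mem_coe, Finset.mem_filter, Finset.mem_range] at ha
    obtain ⟨h1, h2, h3⟩ := ha
    obtain ⟨hr, hs⟩ := run_straddles σ h1 h2
    have hne := runIdx_ne σ h1 v.isLt h2
    have hle := runIdx_mono σ h3.le
    simp only [Finset.mem_coe, Finset.mem_filter, Finset.mem_range]
    refine ⟨hr, ?_, hs⟩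
    rw [runOf_eq]
    omega
  · intro a ha b hb hab
    simp only [rset, Finset.coe_filter, Finset.mem_range, Set.mem_ofPred_eq] at ha hb
    exact runIdx_injOn σ ha.1 hb.1 v.isLt ha.2.1 hb.2.1 hab
  · intro r hr
    simp only [Finset.coe_filter, Finset.mem_range, Set.mem_ofPred_eq] at hr
    obtain ⟨-, h2, ⟨a, rfl, ha⟩, ⟨b, hb, hvb⟩⟩ := hr
    obtain ⟨e, he, h3, h4⟩ := exists_asc σ ha hvb hb.symm h2.ne'
    refine ⟨e, ?_, h4⟩
    simp only [rset, Finset.coe_filter, Finset.mem_range, Set.mem_ofPred_eq]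
    refine ⟨he, h3, ?_⟩
    by_contra hn
    have := runIdx_mono σ (not_lt.1 hn)
    rw [runOf_eq σ v] at h2
    omega

lemma dset_card_eq (σ : Equiv.Perm (Fin n)) (v : Fin n) :
    (dset σ v).card = if startsB σ (σ.symm v).val = true then 0 else 1 := by
  have hle := dset_card_le σ v.isLt
  have hpv := ps_lt σ v.isLt
  have hps : (σ.symm v).val = ps σ v := by simp [ps]
  rw [hps]
  have hst : startsB σ (ps σ v) = true ↔ ps σ v = 0 ∨ descB σ (ps σ v - 1) = true := by
    simp [startsB]
  split_ifs with h
  · rw [hst, descB_iff] at h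
    rw [Finset.card_eq_zero, dset, Finset.filter_eq_empty_iff]
    intro a ha hn
    rw [Finset.mem_range] at ha
    have h1 := ps_nx σ hn
    rw [h1] at h
    rw [Nat.add_sub_cancel, w1_ps σ (by omega), ← h1, w1_ps σ v.isLt] at h
    omega
  · rw [hst, not_or] at h
    have h1 := w1_lt_succ σ (j := ps σ v - 1) (by omega) h.2
    rw [Nat.sub_add_cancel (by omega), w1_ps σ v.isLt] at h1
    obtain ⟨a, ha, h2, h3⟩ := exists_ps σ (p := ps σ v - 1) (by omega)
    have : 0 < (dset σ v).card := by
      refine Finset.card_pos.2 ⟨a, ?_⟩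
      rw [dset, Finset.mem_filter, Finset.mem_range]
      exact ⟨by omega, nx_eq σ v.isLt (by omega)⟩
    omega

/-- There are `n - run σ` letters not beginning a run, as each run has one first letter. -/
lemma sum_dset (hn : 1 ≤ n) (σ : Equiv.Perm (Fin n)) :
    ∑ v : Fin n, (dset σ v).card = n - runCount σ := by
  have hr : ∀ m, (∑ p ∈ Finset.range m, if descB σ p = true then 0 else 1) + runIdx σ m = m := by
    intro m
    induction m with
    | zero => simp [runIdx]
    | succ m ih =>
      rw [Finset.sum_range_succ, runIdx_succ]
      split_ifs <;> omega
  simp only [dset_card_eq]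
  rw [Equiv.sum_comp σ.symm (fun p : Fin n => if startsB σ p.val = true then 0 else 1),
    Fin.sum_univ_eq_sum_range (fun p => if startsB σ p = true then 0 else 1) n]
  rw [runCount, if_neg (by omega)]
  have hd : ¬ descB σ (n-1) = true := by rw [descB_iff]; omega
  have h1 := runIdx_succ σ (n-1)
  rw [if_neg hd, Nat.sub_add_cancel hn] at h1
  have h2 := hr (n-1)
  have h3 := Finset.sum_range_succ' (fun p => if startsB σ p = true then 0 else 1) (n-1)
  rw [Nat.sub_add_cancel hn] at h3
  rw [h3]
  simp only [startsB, Nat.add_sub_cancel, beq_self_eq_true, Bool.true_or, if_true]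
  have h4 : ∀ p, ((p + 1 == 0) || descB σ p) = descB σ p := by simp
  simp only [h4]
  omega

lemma sum_qint_reflect (h m : ℕ) :
    ∑ j ∈ Finset.range (m+1), X ^ (h + (m - j)) = X ^ h * qint X (m+1) := by
  rw [← sum_qint_shift, ← Finset.sum_range_reflect (fun j => X ^ (h + j))]
  refine Finset.sum_congr rfl fun j _ => ?_
  simp

end SS

open SS in
/-- Both `s` and `s'` are Mahonian: their generating functions over `S_n` equal `[n]_q!`. -/
theorem stmt4 (n : ℕ) (hn : 1 ≤ n) :
    (∑ σ : Equiv.Perm (Fin n),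
        (Polynomial.X : Polynomial ℤ) ^ (n - runCount σ + 2 * lsg σ + rsg σ)
      = qfact (Polynomial.X : Polynomial ℤ) n) ∧
    (∑ σ : Equiv.Perm (Fin n),
        (Polynomial.X : Polynomial ℤ) ^
          (n - runCount σ + lsgSing σ + 2 * rsgSing σ + lsgOp σ + 2 * rsgOp σ
            + 2 * lsgCont σ + rsgCont σ + 2 * lsgClos σ + rsgClos σ)
      = qfact (Polynomial.X : Polynomial ℤ) n) := by
  constructor
  · rw [← sum_perm (n := n) (fun h _ j => h + j) (fun h => sum_qint_shift h _)
      (fun h => sum_qint_shift h _)]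
    refine Finset.sum_congr rfl fun σ _ => ?_
    congr 1
    rw [← sum_dset hn, lsg, rsg, Finset.mul_sum, ← Finset.sum_add_distrib,
      ← Finset.sum_add_distrib,
      ← Fin.sum_univ_eq_sum_range (fun a => ht σ a + (lset σ a).card) n]
    refine Finset.sum_congr rfl fun v _ => ?_
    have := ends_split σ v.isLt
    rw [lsgAt_eq, rsgAt_eq]
    omega
  ·
    -- For letters beginning a run the roles of `lsg` and `rsg` are exchanged: `j ↦ h - j`.
    rw [← sum_perm (n := n) (fun h d j => if d = 0 then h + (h - j) else h + j)
      (fun h => by simpa using sum_qint_reflect h h)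
      (fun h => by simpa using sum_qint_shift h h)]
    refine Finset.sum_congr rfl fun σ _ => ?_
    congr 1
    rw [← sum_dset hn, ← Fin.sum_univ_eq_sum_range (fun a => if (dset σ a).card = 0
      then ht σ a + (ht σ a - (lset σ a).card) else ht σ a + (lset σ a).card) n]
    simp only [lsgSing, rsgSing, lsgOp, rsgOp, lsgCont, rsgCont, lsgClos, rsgClos,
      Finset.sum_filter, Finset.mul_sum, ← Finset.sum_add_distrib]
    refine Finset.sum_congr rfl fun v _ => ?_
    have h1 := ends_split σ v.isLt
    have h2 := dset_card_eq σ v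
    rw [lsgAt_eq, rsgAt_eq]
    unfold singB openerB contB closerB
    generalize startsB σ (σ.symm v).val = s at *
    generalize endsB σ (σ.symm v).val = e
    generalize (dset σ v).card = d at *
    cases s <;> cases e <;> simp at h2 ⊢ <;> subst h2 <;> simp <;> omega
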